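/- arXiv:2102.00135 — 3 statements merged into one kernel-verified Lean document; each statement's English description precedes it below -/
import Mathlib

section
/- For any policy π, any state s, and any τ, τ' ≥ 0: V_τ^π(s) − V_{τ'}^π(s) = ((τ − τ')/(1−γ)) Σ_{s'} d_s^π(s') D_{π_0}^π(s'). Consequently, if π_0 is the uniform policy and τ ≥ τ' ≥ 0, then V_{τ'}^π(s) ≤ V_τ^π(s) ≤ V_{τ'}^π(s) + ((τ − τ')/(1−γ)) log|A|. -/
open Finset

noncomputable section

namespace RL

/-- The probability simplex on a finite set `A`. -/
def simplex (A : Type*) [Fintype A] : Set (A → ℝ) :=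
  {p | (∀ a, 0 ≤ p a) ∧ ∑ a, p a = 1}

/-- A policy assigns to each state a distribution over actions. -/
def IsPolicy {S A : Type*} [Fintype A] (π : S → A → ℝ) : Prop :=
  ∀ s, π s ∈ simplex A

/-- `KL q p` is the Bregman (KL) divergence `D_q^p = ∑_a p a * log (p a / q a)`. -/
def KL {A : Type*} [Fintype A] (q p : A → ℝ) : ℝ :=
  ∑ a, p a * Real.log (p a / q a)

/-- The state transition matrix `P^π` induced by policy `π`. -/
def Pmat {S A : Type*} [Fintype A] (P : S → A → S → ℝ) (π : S → A → ℝ) :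
    Matrix S S ℝ :=
  Matrix.of fun s s' => ∑ a, π s a * P s a s'

/-- `V` satisfies the Bellman equation for policy `π`, cost `c`, regularizer `h`,
and discount factor `γ`. -/
def IsValue {S A : Type*} [Fintype S] [Fintype A] (P : S → A → S → ℝ)
    (c : S → A → ℝ) (h : S → (A → ℝ) → ℝ) (γ : ℝ) (π : S → A → ℝ)
    (V : S → ℝ) : Prop :=
  ∀ s, V s = (∑ a, π s a * c s a) + h s (π s)
    + γ * ∑ s', (∑ a, π s a * P s a s') * V s'

/-- The action-value function `Q^π` determined by a state-value function `V`. -/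
def Qfun {S A : Type*} [Fintype S] (P : S → A → S → ℝ) (c : S → A → ℝ)
    (h : S → (A → ℝ) → ℝ) (γ : ℝ) (π : S → A → ℝ) (V : S → ℝ) :
    S → A → ℝ :=
  fun s a => c s a + h s (π s) + γ * ∑ s', P s a s' * V s'

/-- The discounted state-visitation distribution `d_s^π(s')`. -/
def dvisit {S A : Type*} [Fintype S] [Fintype A] [DecidableEq S]
    (P : S → A → S → ℝ) (γ : ℝ) (π : S → A → ℝ) (s s' : S) : ℝ :=
  (1 - γ) * ∑' t : ℕ, γ ^ t * ((Pmat P π) ^ t) s s'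

/-- `next` minimizes `p ↦ η * (⟨G, p⟩ + hreg p) + KL base p` over the simplex. -/
def IsProxStep {A : Type*} [Fintype A] (G : A → ℝ) (hreg : (A → ℝ) → ℝ)
    (η : ℝ) (base next : A → ℝ) : Prop :=
  next ∈ simplex A ∧ ∀ p ∈ simplex A,
    η * ((∑ a, G a * next a) + hreg next) + KL base next ≤
      η * ((∑ a, G a * p a) + hreg p) + KL base p

/-- `h` is convex with modulus `μ` relative to KL, with subgradients `h'`. -/
def ConvexReg {S A : Type*} [Fintype A] (h : S → (A → ℝ) → ℝ)
    (h' : S → (A → ℝ) → A → ℝ) (μ : ℝ) : Prop :=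
  ∀ s : S, ∀ p ∈ simplex A, ∀ q ∈ simplex A,
    μ * KL q p ≤ h s p - (h s q + ∑ a, h' s q a * (p a - q a))

lemma pow_stoch {S : Type*} [Fintype S] [DecidableEq S] (M : Matrix S S ℝ)
    (h0 : ∀ s s', 0 ≤ M s s') (h1 : ∀ s, ∑ s', M s s' = 1) (t : ℕ) :
    (∀ s s', 0 ≤ (M ^ t) s s') ∧ ∀ s, ∑ s', (M ^ t) s s' = 1 := by
  induction t with
  | zero =>
    refine ⟨fun s s' => ?_, fun s => ?_⟩
    · rw [pow_zero, Matrix.one_apply]; split_ifs <;> norm_num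
    · simp [Matrix.one_apply]
  | succ k ih =>
    refine ⟨fun s s' => ?_, fun s => ?_⟩
    · rw [pow_succ, Matrix.mul_apply]
      exact Finset.sum_nonneg fun j _ => mul_nonneg (ih.1 _ _) (h0 _ _)
    · simp only [pow_succ, Matrix.mul_apply]
      rw [Finset.sum_comm]
      simp only [← Finset.mul_sum, h1, mul_one]
      exact ih.2 s

lemma summ {S : Type*} [Fintype S] [DecidableEq S] (M : Matrix S S ℝ)
    (h0 : ∀ s s', 0 ≤ M s s') (h1 : ∀ s, ∑ s', M s s' = 1) (γ : ℝ) (hγ0 : 0 < γ) (hγ1 : γ < 1)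
    (s s' : S) : Summable fun t : ℕ => γ ^ t * (M ^ t) s s' := by
  refine Summable.of_nonneg_of_le (fun t => ?_) (fun t => ?_)
    (summable_geometric_of_lt_one hγ0.le hγ1)
  · exact mul_nonneg (pow_nonneg hγ0.le _) ((pow_stoch M h0 h1 t).1 s s')
  · have h := pow_stoch M h0 h1 t
    have : (M ^ t) s s' ≤ 1 := by
      rw [← h.2 s]
      exact Finset.single_le_sum (fun j _ => h.1 s j) (Finset.mem_univ s')
    exact mul_le_of_le_one_right (pow_nonneg hγ0.le _) this

lemma key {S : Type*} [Fintype S] [DecidableEq S] (M : Matrix S S ℝ)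
    (h0 : ∀ s s', 0 ≤ M s s') (h1 : ∀ s, ∑ s', M s s' = 1) (γ : ℝ) (hγ0 : 0 < γ) (hγ1 : γ < 1)
    (u b : S → ℝ) (hu : ∀ s, u s = b s + γ * ∑ s', M s s' * u s') (s : S) :
    ∑ s', (∑' t : ℕ, γ ^ t * (M ^ t) s s') * b s' = u s := by
  have H : ∀ w : S → ℝ, HasSum (fun t : ℕ => ∑ s', γ ^ t * (M ^ t) s s' * w s')
      (∑ s', (∑' t : ℕ, γ ^ t * (M ^ t) s s') * w s') := fun w =>
    hasSum_sum fun s' _ => (summ M h0 h1 γ hγ0 hγ1 s s').hasSum.mul_right (w s')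
  have tele : ∀ t : ℕ, ∑ s', γ ^ t * (M ^ t) s s' * b s' =
      ∑ s', γ ^ t * (M ^ t) s s' * u s' - ∑ s', γ ^ (t+1) * (M ^ (t+1)) s s' * u s' := by
    intro t
    have e : ∑ s', γ ^ (t+1) * (M ^ (t+1)) s s' * u s' =
        ∑ s', γ ^ t * (M ^ t) s s' * (γ * ∑ j, M s' j * u j) := by
      simp only [pow_succ M, Matrix.mul_apply, Finset.mul_sum, Finset.sum_mul]
      rw [Finset.sum_comm]
      refine Finset.sum_congr rfl fun i _ => Finset.sum_congr rfl fun j _ => ?_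
      ring
    rw [e, ← Finset.sum_sub_distrib]
    refine Finset.sum_congr rfl fun i _ => ?_
    have := hu i
    have hb : b i = u i - γ * ∑ s', M i s' * u s' := by linarith
    rw [hb]; ring
  have part : ∀ n : ℕ, ∑ t ∈ Finset.range n, ∑ s', γ ^ t * (M ^ t) s s' * b s' =
      u s - ∑ s', γ ^ n * (M ^ n) s s' * u s' := by
    intro n
    induction n with
    | zero => simp [Matrix.one_apply]
    | succ k ih => rw [Finset.sum_range_succ, ih, tele]; ring
  have l1 := (H b).tendsto_sum_nat
  simp only [part] at l1
  have l2 := (H u).summable.tendsto_atTop_zero.const_sub (u s)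
  rw [sub_zero] at l2
  exact tendsto_nhds_unique l1 l2

lemma KL_bounds {A : Type*} [Fintype A] [Nonempty A] (q p : A → ℝ) (hp : p ∈ simplex A)
    (hq : ∀ a, q a = 1 / (Fintype.card A : ℝ)) :
    0 ≤ KL q p ∧ KL q p ≤ Real.log (Fintype.card A) := by
  have hN : (0 : ℝ) < Fintype.card A := by exact_mod_cast Fintype.card_pos
  obtain ⟨hp0, hp1⟩ := hp
  constructor
  · have : ∑ a, (p a - q a) = 0 := by
      rw [Finset.sum_sub_distrib, hp1]
      simp [hq, hN.ne']
    rw [← this]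
    refine Finset.sum_le_sum fun a _ => ?_
    have hqa : 0 < q a := by rw [hq]; positivity
    rcases (hp0 a).eq_or_lt with h | h
    · rw [← h]; simp; exact hqa.le
    · have := Real.one_sub_inv_le_log_of_pos (div_pos h hqa)
      have h2 := mul_le_mul_of_nonneg_left this h.le
      have : p a * (1 - (p a / q a)⁻¹) = p a - q a := by field_simp
      linarith
  · have : Real.log (Fintype.card A) = ∑ a, p a * Real.log (Fintype.card A) := by
      rw [← Finset.sum_mul, hp1, one_mul]
    rw [this]
    refine Finset.sum_le_sum fun a _ => ?_
    rcases (hp0 a).eq_or_lt with h | h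
    · rw [← h]; simp
    · refine mul_le_mul_of_nonneg_left (Real.log_le_log ?_ ?_) h.le
      · rw [hq]; positivity
      · have : p a ≤ 1 := by
          rw [← hp1]
          exact Finset.single_le_sum (fun j _ => hp0 j) (Finset.mem_univ a)
        rw [hq, div_div_eq_mul_div, div_one]
        exact mul_le_of_le_one_left hN.le this

/-- for any policy `π`, state `s` and `τ, τ' ≥ 0`:
`V_τ^π(s) - V_{τ'}^π(s) = ((τ - τ')/(1-γ)) ∑_{s'} d_s^π(s') D_{π_0}^π(s')`;
consequently, if `π_0` is the uniform policy and `τ ≥ τ' ≥ 0`, then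
`V_{τ'}^π(s) ≤ V_τ^π(s) ≤ V_{τ'}^π(s) + ((τ - τ')/(1-γ)) log|A|`. -/
theorem perturbed_value_difference {S A : Type*} [Fintype S] [Fintype A]
    [Nonempty S] [Nonempty A] [DecidableEq S]
    (P : S → A → S → ℝ) (hP0 : ∀ s a s', 0 ≤ P s a s')
    (hP1 : ∀ s a, ∑ s', P s a s' = 1)
    (c : S → A → ℝ) (γ : ℝ) (hγ0 : 0 < γ) (hγ1 : γ < 1)
    (h : S → (A → ℝ) → ℝ)
    (π0 : S → A → ℝ) (hπ0 : IsPolicy π0) (hπ0pos : ∀ s a, 0 < π0 s a)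
    (π : S → A → ℝ) (hπ : IsPolicy π)
    (τ τ' : ℝ) (hτ : 0 ≤ τ) (hτ' : 0 ≤ τ')
    (Vτ Vτ' : S → ℝ)
    (hVτ : IsValue P c (fun s p => h s p + τ * KL (π0 s) p) γ π Vτ)
    (hVτ' : IsValue P c (fun s p => h s p + τ' * KL (π0 s) p) γ π Vτ') :
    (∀ s, Vτ s - Vτ' s =
        ((τ - τ') / (1 - γ)) * ∑ s', dvisit P γ π s s' * KL (π0 s') (π s'))
    ∧ ((∀ s a, π0 s a = 1 / (Fintype.card A : ℝ)) → τ' ≤ τ →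
        ∀ s, Vτ' s ≤ Vτ s ∧
          Vτ s ≤ Vτ' s + ((τ - τ') / (1 - γ)) * Real.log (Fintype.card A)) := by
  have hg : (0 : ℝ) < 1 - γ := by linarith
  have h0 : ∀ s s', 0 ≤ Pmat P π s s' := fun s s' =>
    Finset.sum_nonneg fun a _ => mul_nonneg ((hπ s).1 a) (hP0 s a s')
  have h1 : ∀ s, ∑ s', Pmat P π s s' = 1 := by
    intro s
    simp only [Pmat, Matrix.of_apply]
    rw [Finset.sum_comm]
    simp only [← Finset.mul_sum, hP1, mul_one]
    exact (hπ s).2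
  have main : ∀ s, Vτ s - Vτ' s =
      ((τ - τ') / (1 - γ)) * ∑ s', dvisit P γ π s s' * KL (π0 s') (π s') := by
    intro s
    have k := key (Pmat P π) h0 h1 γ hγ0 hγ1 (fun s => Vτ s - Vτ' s)
      (fun s => (τ - τ') * KL (π0 s) (π s)) (fun s => by
        have e1 := hVτ s
        have e2 := hVτ' s
        simp only [Pmat, Matrix.of_apply, mul_sub, Finset.sum_sub_distrib]
        rw [e1, e2]
        ring) s
    rw [← k, Finset.mul_sum]
    refine Finset.sum_congr rfl fun s' _ => ?_
    unfold dvisit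
    field_simp
  refine ⟨main, fun hu hle s => ?_⟩
  have d0 : ∀ s', 0 ≤ dvisit P γ π s s' := fun s' =>
    mul_nonneg hg.le (tsum_nonneg fun t =>
      mul_nonneg (pow_nonneg hγ0.le _) ((pow_stoch _ h0 h1 t).1 s s'))
  have d1 : ∑ s', dvisit P γ π s s' = 1 := by
    have k := key (Pmat P π) h0 h1 γ hγ0 hγ1 (fun _ => 1 / (1 - γ)) (fun _ => 1) (fun s => by
      rw [← Finset.sum_mul, h1]; field_simp; ring) s
    simp only [mul_one] at k
    simp only [dvisit]
    rw [← Finset.mul_sum, k]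
    field_simp
  have B := fun s' => KL_bounds (π0 s') (π s') (hπ s') (hu s')
  have n1 : 0 ≤ ∑ s', dvisit P γ π s s' * KL (π0 s') (π s') :=
    Finset.sum_nonneg fun s' _ => mul_nonneg (d0 s') (B s').1
  have n2 : ∑ s', dvisit P γ π s s' * KL (π0 s') (π s') ≤ Real.log (Fintype.card A) := by
    calc _ ≤ ∑ s', dvisit P γ π s s' * Real.log (Fintype.card A) :=
          Finset.sum_le_sum fun s' _ => mul_le_mul_of_nonneg_left (B s').2 (d0 s')
      _ = _ := by rw [← Finset.sum_mul, d1, one_mul]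
  have n3 : 0 ≤ (τ - τ') / (1 - γ) := div_nonneg (by linarith) hg.le
  have m := main s
  have m1 := mul_nonneg n3 n1
  have m2 := mul_le_mul_of_nonneg_left n2 n3
  constructor <;> linarith

end RL
end
end

section
/- (One-step recursion of APMD.) Let (π_k) be APMD iterates: π_{k+1}(·|s) = argmin_{p∈Δ_A} { η_k[⟨Q_{τ_k}^{π_k}(s,·), p⟩ + h^p(s) + τ_k D_{π_0}^p(s)] + D_{π_k}^p(s) } for every s, where π_0 is the uniform policy. If 1 + η_k τ_k = 1/γ and τ_k ≥ τ_{k+1} ≥ 0, then Σ_s ν*(s) [ V_{τ_{k+1}}^{π_{k+1}}(s) − V_{τ_{k+1}}^{π*}(s) + (τ_{k+1}/(1−γ)) D_{π_{k+1}}^{π*}(s) ] ≤ γ Σ_s ν*(s) [ V_{τ_k}^{π_k}(s) − V_{τ_k}^{π*}(s) + (τ_k/(1−γ)) D_{π_k}^{π*}(s) ] + ((τ_k − τ_{k+1})/(1−γ)) log|A|. -/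
open Finset

noncomputable section

namespace RL

lemma KL_eq {A : Type*} [Fintype A] (b p : A → ℝ) (hb : ∀ a, 0 < b a) :
    KL b p = ∑ a, (p a * Real.log (p a) - p a * Real.log (b a)) := by
  unfold KL
  refine Finset.sum_congr rfl fun a _ => ?_
  by_cases hp : p a = 0
  · simp [hp]
  · rw [Real.log_div hp (hb a).ne']; ring

lemma KL_nonneg {A : Type*} [Fintype A] (b p : A → ℝ) (hb : ∀ a, 0 < b a)
    (hb1 : b ∈ simplex A) (hp : p ∈ simplex A) : 0 ≤ KL b p := by
  have h1 : ∑ a, (p a - b a) ≤ KL b p := by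
    unfold KL
    refine Finset.sum_le_sum fun a _ => ?_
    rcases (hp.1 a).eq_or_lt with h0 | h0
    · rw [← h0]; simp [(hb a).le]
    · have := Real.one_sub_inv_le_log_of_pos (div_pos h0 (hb a))
      have h2 := mul_le_mul_of_nonneg_left this h0.le
      have h3 : p a * (1 - (p a / b a)⁻¹) = p a - b a := by
        have := h0.ne'
        have := (hb a).ne'
        field_simp
      linarith
  rw [Finset.sum_sub_distrib, hp.2, hb1.2] at h1
  linarith

lemma KL_le_chi {A : Type*} [Fintype A] (b p : A → ℝ) (hb : ∀ a, 0 < b a)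
    (hb1 : b ∈ simplex A) (hp : p ∈ simplex A) :
    KL b p ≤ ∑ a, (p a - b a) ^ 2 / b a := by
  have h1 : KL b p ≤ ∑ a, ((p a - b a) ^ 2 / b a + (p a - b a)) := by
    unfold KL
    refine Finset.sum_le_sum fun a _ => ?_
    have hba := (hb a).ne'
    have h3 : (p a - b a) ^ 2 / b a + (p a - b a) = p a * (p a / b a - 1) := by
      field_simp; ring
    rw [h3]
    rcases (hp.1 a).eq_or_lt with h0 | h0
    · rw [← h0]; simp
    · exact mul_le_mul_of_nonneg_left
        (Real.log_le_sub_one_of_pos (div_pos h0 (hb a))) h0.le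
  rw [Finset.sum_add_distrib, Finset.sum_sub_distrib, hp.2, hb1.2] at h1
  linarith

lemma KL_unif_le {A : Type*} [Fintype A] [Nonempty A] (b p : A → ℝ)
    (hb : ∀ a, b a = 1 / (Fintype.card A : ℝ)) (hp : p ∈ simplex A) :
    KL b p ≤ Real.log (Fintype.card A) := by
  have hc : (0 : ℝ) < Fintype.card A := by exact_mod_cast Fintype.card_pos
  rw [KL_eq b p (fun a => by rw [hb a]; positivity)]
  calc _ ≤ ∑ a, p a * Real.log (Fintype.card A) := by
        refine Finset.sum_le_sum fun a _ => ?_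
        rw [hb a, one_div, Real.log_inv]
        have : p a ≤ 1 := by
          rw [← hp.2]
          exact Finset.single_le_sum (fun i _ => hp.1 i) (Finset.mem_univ a)
        have := mul_nonpos_of_nonneg_of_nonpos (hp.1 a) (Real.log_nonpos (hp.1 a) this)
        linarith
    _ = _ := by rw [← Finset.sum_mul, hp.2, one_mul]

/-- Three-point inequality for the prox step. -/
lemma three_point {A : Type*} [Fintype A] (G : A → ℝ) (r : (A → ℝ) → ℝ)
    (r' : (A → ℝ) → A → ℝ)
    (hr : ∀ p ∈ simplex A, ∀ q ∈ simplex A, r q + ∑ a, r' q a * (p a - q a) ≤ r p)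
    (τ η : ℝ) (hη : 0 ≤ η) (hτ : 0 ≤ τ) (u b q p : A → ℝ)
    (hu : ∀ a, 0 < u a) (hb : ∀ a, 0 < b a) (hq : ∀ a, 0 < q a)
    (hp : p ∈ simplex A)
    (hstep : IsProxStep G (fun p => r p + τ * KL u p) η b q) :
    η * ((∑ a, G a * q a) + (r q + τ * KL u q)) + KL b q + (1 + η * τ) * KL q p
      ≤ η * ((∑ a, G a * p a) + (r p + τ * KL u p)) + KL b p := by
  obtain ⟨hqs, hmin⟩ := hstep
  set C := (1 + η * τ) * ∑ a, (p a - q a) ^ 2 / q a with hC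
  have key : ∀ t : ℝ, 0 < t → t < 1 →
      η * ((∑ a, G a * q a) + (r q + τ * KL u q)) + KL b q + (1 + η * τ) * KL q p
      - (η * ((∑ a, G a * p a) + (r p + τ * KL u p)) + KL b p) ≤ t * C := by
    intro t ht0 ht1
    set w : A → ℝ := fun a => q a + t * (p a - q a) with hw
    have hws : w ∈ simplex A := by
      refine ⟨fun a => ?_, ?_⟩
      · have := mul_nonneg ht0.le (hp.1 a)
        have := mul_nonneg (sub_nonneg.2 ht1.le) (hq a).le
        simp only [hw]; linarith
      · simp only [hw]
        rw [Finset.sum_add_distrib, ← Finset.mul_sum, Finset.sum_sub_distrib, hp.2, hqs.2]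
        ring
    have hm := hmin w hws
    have hrw : r w ≤ (1 - t) * r q + t * r p := by
      have e1 := mul_le_mul_of_nonneg_left (hr p hp w hws) ht0.le
      have e2 := mul_le_mul_of_nonneg_left (hr q hqs w hws) (sub_nonneg.2 ht1.le)
      have e3 : t * (∑ a, r' w a * (p a - w a)) + (1 - t) * (∑ a, r' w a * (q a - w a)) = 0 := by
        rw [Finset.mul_sum, Finset.mul_sum, ← Finset.sum_add_distrib]
        refine Finset.sum_eq_zero fun a _ => ?_
        simp only [hw]; ring
      linarith
    have hchi := KL_le_chi q w hq hqs hws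
    have hchi' : ∑ a, (w a - q a) ^ 2 / q a = t ^ 2 * ∑ a, (p a - q a) ^ 2 / q a := by
      rw [Finset.mul_sum]
      refine Finset.sum_congr rfl fun a _ => ?_
      simp only [hw]; ring
    rw [hchi'] at hchi
    have hG : ∑ a, G a * w a = (1 - t) * (∑ a, G a * q a) + t * ∑ a, G a * p a := by
      rw [Finset.mul_sum, Finset.mul_sum, ← Finset.sum_add_distrib]
      refine Finset.sum_congr rfl fun a _ => ?_
      simp only [hw]; ring
    -- KL along the segment
    have hK : ∀ v : A → ℝ, (∀ a, 0 < v a) →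
        KL v w = (1 - t) * KL v q + t * KL v p + (KL q w - t * KL q p) := by
      intro v hv
      rw [KL_eq v w hv, KL_eq v q hv, KL_eq v p hv, KL_eq q w hq, KL_eq q p hq]
      simp only [Finset.mul_sum]
      rw [← Finset.sum_sub_distrib, ← Finset.sum_add_distrib, ← Finset.sum_add_distrib]
      refine Finset.sum_congr rfl fun a _ => ?_
      have : w a = q a + t * (p a - q a) := rfl
      generalize Real.log (w a) = L
      rw [this]; ring
    simp only [hG, hK u hu, hK b hb] at hm
    have hM : 0 ≤ 1 + η * τ := by positivity
    have e1 := mul_le_mul_of_nonneg_left hrw hη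
    have e2 := mul_le_mul_of_nonneg_left hchi hM
    have : t * (η * ((∑ a, G a * q a) + (r q + τ * KL u q)) + KL b q + (1 + η * τ) * KL q p
      - (η * ((∑ a, G a * p a) + (r p + τ * KL u p)) + KL b p)) ≤ t * (t * C) := by
      rw [hC]
      linarith
    exact le_of_mul_le_mul_left this ht0
  by_contra hcon
  push Not at hcon
  set X := η * ((∑ a, G a * q a) + (r q + τ * KL u q)) + KL b q + (1 + η * τ) * KL q p
      - (η * ((∑ a, G a * p a) + (r p + τ * KL u p)) + KL b p) with hX
  have hXpos : 0 < X := by rw [hX]; linarith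
  have hCp : 0 < C := by
    have := key (1/2) (by norm_num) (by norm_num)
    linarith
  have ht := key (min (1/2) (X / (2 * C))) (by positivity)
    (lt_of_le_of_lt (min_le_left _ _) (by norm_num))
  have := mul_le_mul_of_nonneg_right (min_le_right (1/2) (X / (2 * C))) hCp.le
  have e : X / (2 * C) * C = X / 2 := by field_simp
  linarith

/-- Maximum principle. -/
lemma max_principle {S A : Type*} [Fintype S] [Fintype A] [Nonempty S]
    (P : S → A → S → ℝ) (hP0 : ∀ s a s', 0 ≤ P s a s')
    (hP1 : ∀ s a, ∑ s', P s a s' = 1) (γ : ℝ) (hγ0 : 0 < γ) (hγ1 : γ < 1)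
    (w : S → A → ℝ) (hw : IsPolicy w) (W : S → ℝ)
    (hW : ∀ s, W s ≤ γ * ∑ s', (∑ a, w s a * P s a s') * W s') : ∀ s, W s ≤ 0 := by
  obtain ⟨m, hm⟩ := Finite.exists_max W
  have hrow : ∑ s', (∑ a, w m a * P m a s') = 1 := by
    rw [Finset.sum_comm]
    simp only [← Finset.mul_sum, hP1, mul_one]
    exact (hw m).2
  have h1 : ∑ s', (∑ a, w m a * P m a s') * W s' ≤ W m := by
    calc _ ≤ ∑ s', (∑ a, w m a * P m a s') * W m :=
          Finset.sum_le_sum fun s' _ => mul_le_mul_of_nonneg_left (hm s')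
            (Finset.sum_nonneg fun a _ => mul_nonneg ((hw m).1 a) (hP0 _ _ _))
      _ = _ := by rw [← Finset.sum_mul, hrow, one_mul]
  have h2 := hW m
  have h3 := mul_le_mul_of_nonneg_left h1 hγ0.le
  have : W m ≤ 0 := by nlinarith
  exact fun s => (hm s).trans this

lemma Q_inner {S A : Type*} [Fintype S] [Fintype A]
    (P : S → A → S → ℝ) (c : S → A → ℝ) (H : S → (A → ℝ) → ℝ) (γ : ℝ)
    (π : S → A → ℝ) (V : S → ℝ) (s : S) (p : A → ℝ) (hp : p ∈ simplex A) :
    ∑ a, Qfun P c H γ π V s a * p a = (∑ a, p a * c s a) + H s (π s)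
      + γ * ∑ s', (∑ a, p a * P s a s') * V s' := by
  have e : ∑ s', (∑ a, p a * P s a s') * V s' = ∑ a, p a * ∑ s', P s a s' * V s' := by
    simp only [Finset.sum_mul, Finset.mul_sum]
    rw [Finset.sum_comm]
    simp only [mul_assoc]
  have e2 : H s (π s) = ∑ a, p a * H s (π s) := by rw [← Finset.sum_mul, hp.2, one_mul]
  rw [e]
  conv_rhs => rw [e2]
  rw [Finset.mul_sum, ← Finset.sum_add_distrib, ← Finset.sum_add_distrib]
  refine Finset.sum_congr rfl fun a _ => ?_
  simp only [Qfun]; ring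

/-- one-step recursion of APMD: if `1 + η_k τ_k = 1/γ` and
`τ_k ≥ τ_{k+1} ≥ 0`, then
`∑_s ν*(s) [V_{τ_{k+1}}^{π_{k+1}}(s) - V_{τ_{k+1}}^{π*}(s) + (τ_{k+1}/(1-γ)) D_{π_{k+1}}^{π*}(s)]
  ≤ γ ∑_s ν*(s) [V_{τ_k}^{π_k}(s) - V_{τ_k}^{π*}(s) + (τ_k/(1-γ)) D_{π_k}^{π*}(s)]
    + ((τ_k - τ_{k+1})/(1-γ)) log|A|`. -/
theorem apmd_recursion {S A : Type*} [Fintype S] [Fintype A]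
    [Nonempty S] [Nonempty A]
    (P : S → A → S → ℝ) (hP0 : ∀ s a s', 0 ≤ P s a s')
    (hP1 : ∀ s a, ∑ s', P s a s' = 1)
    (c : S → A → ℝ) (γ : ℝ) (hγ0 : 0 < γ) (hγ1 : γ < 1)
    (h : S → (A → ℝ) → ℝ) (h' : S → (A → ℝ) → A → ℝ)
    (hconv : ConvexReg h h' 0)
    (π : ℕ → S → A → ℝ)
    (hunif : ∀ s a, π 0 s a = 1 / (Fintype.card A : ℝ))
    (hpol : ∀ k, IsPolicy (π k)) (hpos : ∀ k s a, 0 < π k s a)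
    (V : ℝ → (S → A → ℝ) → S → ℝ)
    (hV : ∀ τ : ℝ, 0 ≤ τ → ∀ w : S → A → ℝ, IsPolicy w →
      IsValue P c (fun s p => h s p + τ * KL (π 0 s) p) γ w (V τ w))
    (πstar : S → A → ℝ) (hπstar : IsPolicy πstar)
    (hopt : ∀ w : S → A → ℝ, IsPolicy w → ∀ s, V 0 πstar s ≤ V 0 w s)
    (ν : S → ℝ) (hν0 : ∀ s, 0 ≤ ν s) (hν1 : ∑ s, ν s = 1)
    (hstat : ∀ s', ∑ s, ν s * (∑ a, πstar s a * P s a s') = ν s')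
    (τ η : ℕ → ℝ)
    (hτnn : ∀ k, 0 ≤ τ k) (hτdec : ∀ k, τ (k+1) ≤ τ k)
    (hη : ∀ k, 1 + η k * τ k = 1 / γ)
    (hstep : ∀ k s, IsProxStep
      (Qfun P c (fun s' p => h s' p + τ k * KL (π 0 s') p) γ (π k)
        (V (τ k) (π k)) s)
      (fun p => h s p + τ k * KL (π 0 s) p) (η k) (π k s) (π (k+1) s)) :
    ∀ k : ℕ,
      ∑ s, ν s * (V (τ (k+1)) (π (k+1)) s - V (τ (k+1)) πstar s
          + (τ (k+1) / (1 - γ)) * KL (π (k+1) s) (πstar s))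
        ≤ γ * (∑ s, ν s * (V (τ k) (π k) s - V (τ k) πstar s
            + (τ k / (1 - γ)) * KL (π k s) (πstar s)))
          + ((τ k - τ (k+1)) / (1 - γ)) * Real.log (Fintype.card A) := by
  intro k
  have hηk := hη k
  have hητ : η k * τ k = (1 - γ) / γ := by
    have : (1 - γ) / γ = 1 / γ - 1 := by field_simp
    linarith
  have h1γ : 0 < 1 - γ := by linarith
  have hpr : 0 < η k * τ k := by rw [hητ]; positivity
  have hτp : 0 < τ k := by
    rcases (hτnn k).eq_or_lt with h0 | h0
    · rw [← h0] at hpr; simp at hpr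
    · exact h0
  have hηp : 0 < η k := pos_of_mul_pos_left hpr hτp.le
  have hr : ∀ s, ∀ p ∈ simplex A, ∀ q ∈ simplex A,
      h s q + ∑ a, h' s q a * (p a - q a) ≤ h s p := by
    intro s p hp q hq
    have := hconv s p hp q hq
    linarith
  -- three-point inequality at every state
  have h3 : ∀ s, ∀ p ∈ simplex A, _ := fun s p hp =>
    three_point _ (h s) (h' s) (hr s) (τ k) (η k) hηp.le hτp.le (π 0 s) (π k s) (π (k+1) s) p
      (hpos 0 s) (hpos k s) (hpos (k+1) s) hp (hstep k s)
  have bell : ∀ t, 0 ≤ t → ∀ w, IsPolicy w → ∀ s, V t w s = (∑ a, w s a * c s a)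
      + (h s (w s) + t * KL (π 0 s) (w s))
      + γ * ∑ s', (∑ a, w s a * P s a s') * V t w s' := hV
  have bk := bell (τ k) hτp.le (π k) (hpol k)
  have bn := bell (τ k) hτp.le (π (k+1)) (hpol (k+1))
  have bs := bell (τ k) hτp.le πstar hπstar
  have bn' := bell (τ (k+1)) (hτnn _) (π (k+1)) (hpol (k+1))
  have bs' := bell (τ (k+1)) (hτnn _) πstar hπstar
  clear bell
  set Vk := V (τ k) (π k) with hVk
  set Vn := V (τ k) (π (k+1)) with hVn
  set Vs := V (τ k) πstar with hVs
  -- Bellman operator for policy w applied to Vk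
  set T : (S → A → ℝ) → S → ℝ := fun w s => (∑ a, w s a * c s a)
    + (h s (w s) + τ k * KL (π 0 s) (w s))
    + γ * ∑ s', (∑ a, w s a * P s a s') * Vk s' with hT
  have hself : ∀ s, KL (π k s) (π k s) = 0 := by
    intro s
    unfold KL
    refine Finset.sum_eq_zero fun a _ => ?_
    rw [div_self (hpos k s a).ne']; simp
  have hTT : ∀ w, IsPolicy w → ∀ s, η k * T (π (k+1)) s + KL (π k s) (π (k+1) s)
      + 1 / γ * KL (π (k+1) s) (w s) ≤ η k * T w s + KL (π k s) (w s) := by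
    intro w hw s
    have := h3 s (w s) (hw s)
    rw [Q_inner _ _ _ _ _ _ _ _ (hw s), Q_inner _ _ _ _ _ _ _ _ (hpol (k+1) s), hηk] at this
    simp only [hT]
    linarith
  have hTk : ∀ s, T (π k) s = Vk s := fun s => (bk s).symm
  have hdec : ∀ s, T (π (k+1)) s ≤ Vk s := by
    intro s
    have := hTT (π k) (hpol k) s
    rw [hself, hTk] at this
    have i1 := KL_nonneg _ _ (hpos k s) (hpol k s) (hpol (k+1) s)
    have i2 : 0 ≤ 1 / γ * KL (π (k+1) s) (π k s) :=
      mul_nonneg (by positivity) (KL_nonneg _ _ (hpos (k+1) s) (hpol (k+1) s) (hpol k s))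
    exact le_of_mul_le_mul_left (by linarith) hηp
  have hdiff : ∀ (w : S → A → ℝ) (X Y : S → ℝ) s,
      ∑ s', (∑ a, w s a * P s a s') * (X s' - Y s')
      = ∑ s', (∑ a, w s a * P s a s') * X s' - ∑ s', (∑ a, w s a * P s a s') * Y s' := by
    intro w X Y s
    simp only [mul_sub, Finset.sum_sub_distrib]
  have hVnk : ∀ s, Vn s - Vk s ≤ 0 := by
    refine max_principle P hP0 hP1 γ hγ0 hγ1 (π (k+1)) (hpol (k+1)) (fun s => Vn s - Vk s) ?_
    intro s
    have i1 := hdec s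
    have i2 := bn s
    simp only [hT] at i1
    rw [hdiff, mul_sub]
    linarith
  have hVnT : ∀ s, Vn s ≤ T (π (k+1)) s := by
    intro s
    have i2 := bn s
    have i3 : ∑ s', (∑ a, π (k+1) s a * P s a s') * Vn s'
        ≤ ∑ s', (∑ a, π (k+1) s a * P s a s') * Vk s' :=
      Finset.sum_le_sum fun s' _ => mul_le_mul_of_nonneg_left (by linarith [hVnk s'])
        (Finset.sum_nonneg fun a _ => mul_nonneg ((hpol (k+1) s).1 a) (hP0 _ _ _))
    have i4 := mul_le_mul_of_nonneg_left i3 hγ0.le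
    simp only [hT]
    linarith
  -- pointwise bound
  have hpt : ∀ s, Vn s + τ k / (1 - γ) * KL (π (k+1) s) (πstar s)
      ≤ T πstar s + γ * (τ k / (1 - γ) * KL (π k s) (πstar s)) := by
    intro s
    have i1 := hTT πstar hπstar s
    have i2 := KL_nonneg _ _ (hpos k s) (hpol k s) (hpol (k+1) s)
    have i3 := hVnT s
    have hf : 0 ≤ γ * (τ k / (1 - γ)) := by positivity
    have hfη : γ * (τ k / (1 - γ)) * η k = 1 := by
      have : γ * (τ k / (1 - γ)) * η k = γ * (η k * τ k) / (1 - γ) := by ring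
      rw [this, hητ]; field_simp
    have hfγ : γ * (τ k / (1 - γ)) * (1 / γ) = τ k / (1 - γ) := by field_simp
    have i4 : η k * T (π (k+1)) s + 1 / γ * KL (π (k+1) s) (πstar s)
        ≤ η k * T πstar s + KL (π k s) (πstar s) := by linarith
    have i5 := mul_le_mul_of_nonneg_left i4 hf
    generalize T (π (k+1)) s = x at *
    generalize T πstar s = y at *
    have i6 : γ * (τ k / (1 - γ)) * (η k * x + 1 / γ * KL (π (k+1) s) (πstar s))
        = x + τ k / (1 - γ) * KL (π (k+1) s) (πstar s) := by
      rw [mul_add, ← mul_assoc, hfη, ← mul_assoc, hfγ, one_mul]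
    have i7 : γ * (τ k / (1 - γ)) * (η k * y + KL (π k s) (πstar s))
        = y + γ * (τ k / (1 - γ) * KL (π k s) (πstar s)) := by
      rw [mul_add, ← mul_assoc, hfη, one_mul, mul_assoc]
    linarith
  -- stationarity
  have hst : ∀ X : S → ℝ, ∑ s, ν s * ∑ s', (∑ a, πstar s a * P s a s') * X s' = ∑ s, ν s * X s := by
    intro X
    have : ∀ s, ν s * ∑ s', (∑ a, πstar s a * P s a s') * X s'
        = ∑ s', ν s * ((∑ a, πstar s a * P s a s') * X s') := fun s => Finset.mul_sum _ _ _
    simp only [this]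
    rw [Finset.sum_comm]
    refine Finset.sum_congr rfl fun s' _ => ?_
    rw [← hstat s', Finset.sum_mul]
    simp only [mul_assoc]
  have hTs : ∑ s, ν s * (T πstar s - Vs s) = γ * ∑ s, ν s * (Vk s - Vs s) := by
    rw [← hst (fun s => Vk s - Vs s), Finset.mul_sum]
    refine Finset.sum_congr rfl fun s _ => ?_
    have := bs s
    simp only [hT, hdiff]
    rw [this]; ring
  have hA : ∑ s, ν s * (Vn s - Vs s + τ k / (1 - γ) * KL (π (k+1) s) (πstar s))
      ≤ γ * ∑ s, ν s * (Vk s - Vs s + τ k / (1 - γ) * KL (π k s) (πstar s)) := by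
    calc _ ≤ ∑ s, (ν s * (T πstar s - Vs s)
            + γ * (ν s * (τ k / (1 - γ) * KL (π k s) (πstar s)))) := by
          refine Finset.sum_le_sum fun s _ => ?_
          have := mul_le_mul_of_nonneg_left (hpt s) (hν0 s)
          linarith
      _ = _ := by
          rw [Finset.sum_add_distrib, hTs, ← Finset.mul_sum, ← mul_add, ← Finset.sum_add_distrib]
          simp only [mul_add]
  -- changing τ
  have hmono : ∀ s, V (τ (k+1)) (π (k+1)) s - Vn s ≤ 0 := by
    refine max_principle P hP0 hP1 γ hγ0 hγ1 (π (k+1)) (hpol (k+1))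
      (fun s => V (τ (k+1)) (π (k+1)) s - Vn s) ?_
    intro s
    have i1 := bn s
    have i2 := bn' s
    have i3 := mul_le_mul_of_nonneg_right (hτdec k)
      (KL_nonneg _ _ (hpos 0 s) (hpol 0 s) (hpol (k+1) s))
    rw [hdiff, mul_sub]
    linarith
  have hsv : (1 - γ) * ∑ s, ν s * (Vs s - V (τ (k+1)) πstar s)
      ≤ (τ k - τ (k+1)) * Real.log (Fintype.card A) := by
    have e : ∑ s, ν s * (Vs s - V (τ (k+1)) πstar s)
        = ∑ s, ν s * ((τ k - τ (k+1)) * KL (π 0 s) (πstar s))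
          + γ * ∑ s, ν s * (Vs s - V (τ (k+1)) πstar s) := by
      conv_rhs => rw [← hst (fun s => Vs s - V (τ (k+1)) πstar s)]
      rw [Finset.mul_sum, ← Finset.sum_add_distrib]
      refine Finset.sum_congr rfl fun s _ => ?_
      have i1 := bs s
      have i2 := bs' s
      rw [hdiff]
      have : Vs s - V (τ (k+1)) πstar s = (τ k - τ (k+1)) * KL (π 0 s) (πstar s)
          + γ * (∑ s', (∑ a, πstar s a * P s a s') * Vs s'
            - ∑ s', (∑ a, πstar s a * P s a s') * V (τ (k+1)) πstar s') := by
        linarith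
      rw [this]; ring
    have e2 : ∑ s, ν s * ((τ k - τ (k+1)) * KL (π 0 s) (πstar s))
        ≤ ∑ s, ν s * ((τ k - τ (k+1)) * Real.log (Fintype.card A)) :=
      Finset.sum_le_sum fun s _ => mul_le_mul_of_nonneg_left
        (mul_le_mul_of_nonneg_left (KL_unif_le _ _ (hunif s) (hπstar s))
          (sub_nonneg.2 (hτdec k))) (hν0 s)
    rw [← Finset.sum_mul, hν1, one_mul] at e2
    linarith
  have hsv' : ∑ s, ν s * (Vs s - V (τ (k+1)) πstar s)
      ≤ ((τ k - τ (k+1)) / (1 - γ)) * Real.log (Fintype.card A) := by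
    rw [div_mul_eq_mul_div, le_div_iff₀ h1γ]
    linarith
  have hB : ∑ s, ν s * (V (τ (k+1)) (π (k+1)) s - V (τ (k+1)) πstar s
          + (τ (k+1) / (1 - γ)) * KL (π (k+1) s) (πstar s))
      ≤ ∑ s, ν s * (Vn s - Vs s + τ k / (1 - γ) * KL (π (k+1) s) (πstar s))
        + ∑ s, ν s * (Vs s - V (τ (k+1)) πstar s) := by
    rw [← Finset.sum_add_distrib]
    refine Finset.sum_le_sum fun s _ => ?_
    rw [← mul_add]
    refine mul_le_mul_of_nonneg_left ?_ (hν0 s)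
    have i1 := hmono s
    have i2 := mul_le_mul_of_nonneg_right (div_le_div_of_nonneg_right (hτdec k) h1γ.le)
      (KL_nonneg _ _ (hpos (k+1) s) (hpol (k+1) s) (hπstar s))
    linarith
  linarith

end RL
end
end

section
/- (One-step inequality for SPMD with inexact action-value estimates, pathwise form.) Let π_k be a policy with full support, δ : S×A → ℝ an arbitrary perturbation, 𝒬 = Q^{π_k} + δ, η_k > 0, and define π_{k+1}(·|s) = argmin_{p∈Δ_A} { η_k[⟨𝒬(s,·), p⟩ + h^p(s)] + D_{π_k}^p(s) } for each s. Then for every s ∈ S: V^{π_{k+1}}(s) − V^{π_k}(s) ≤ ⟨𝒬(s,·), π_{k+1}(·|s) − π_k(·|s)⟩ + h^{π_{k+1}}(s) − h^{π_k}(s) + (1/η_k) D_{π_k}^{π_{k+1}}(s) + η_k ‖δ‖_∞² / (2(1−γ)), where ‖δ‖_∞ = max_{s,a}|δ(s,a)|. -/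
open Finset

noncomputable section

namespace RL

theorem aux_deriv (u : ℝ) (hu : 0 < u) :
    HasDerivAt (fun u : ℝ => Real.log u - (u-1)*(5*u+1)/(2*u*(u+2)))
      ((u-1)^3/(u^2*(u+2)^2)) u := by
  have h1 := Real.hasDerivAt_log hu.ne'
  have hid := hasDerivAt_id u
  have hn := ((hid.sub_const 1).mul ((hid.const_mul 5).add_const 1))
  have hd := ((hid.const_mul 2).mul (hid.add_const 2))
  have hne : (2 * id u) * (id u + 2) ≠ 0 := by
    simp only [id]; positivity
  have h2 := h1.sub (hn.div hd hne)
  refine h2.congr_deriv ?_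
  simp only [id, Pi.mul_apply]
  field_simp
  ring

theorem aux_log (u : ℝ) (hu : 0 < u) : (u-1)*(5*u+1)/(2*u*(u+2)) ≤ Real.log u := by
  set F : ℝ → ℝ := fun u : ℝ => Real.log u - (u-1)*(5*u+1)/(2*u*(u+2)) with hF
  have hF1 : F 1 = 0 := by simp [hF]
  suffices hs : 0 ≤ F u by simp only [hF] at hs; linarith
  rcases le_total 1 u with h | h
  · have hm : MonotoneOn F (Set.Ici 1) := by
      apply monotoneOn_of_deriv_nonneg (convex_Ici 1)
      · intro x hx
        exact (aux_deriv x (lt_of_lt_of_le one_pos hx)).continuousAt.continuousWithinAt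
      · intro x hx
        rw [interior_Ici] at hx
        exact (aux_deriv x (lt_trans one_pos hx)).differentiableAt.differentiableWithinAt
      · intro x hx
        rw [interior_Ici] at hx
        have hx' : (1:ℝ) < x := hx
        rw [(aux_deriv x (lt_trans one_pos hx)).deriv]
        have : 0 ≤ x - 1 := by linarith
        positivity
    rw [← hF1]
    exact hm (Set.mem_Ici.2 le_rfl) h h
  · have hm : AntitoneOn F (Set.Ioc 0 1) := by
      apply antitoneOn_of_deriv_nonpos (convex_Ioc 0 1)
      · intro x hx
        exact (aux_deriv x hx.1).continuousAt.continuousWithinAt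
      · intro x hx
        rw [interior_Ioc] at hx
        exact (aux_deriv x hx.1).differentiableAt.differentiableWithinAt
      · intro x hx
        rw [interior_Ioc] at hx
        rw [(aux_deriv x hx.1).deriv]
        apply div_nonpos_of_nonpos_of_nonneg _ (by positivity)
        have h1 : x - 1 ≤ 0 := by linarith [hx.2]
        have h2 : (x-1)^3 = (x-1)*(x-1)^2 := by ring
        rw [h2]
        exact mul_nonpos_of_nonpos_of_nonneg h1 (sq_nonneg _)
    rw [← hF1]
    exact hm ⟨hu, h⟩ ⟨one_pos, le_rfl⟩ h

theorem aux_kl (p q : ℝ) (hp : 0 ≤ p) (hq : 0 < q) :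
    3*(p-q)^2/(2*p+4*q) ≤ p * Real.log (p/q) - p + q := by
  rcases hp.eq_or_lt with rfl | hp
  · simp only [zero_div, Real.log_zero]
    rw [div_le_iff₀ (by positivity)]
    nlinarith [sq_nonneg q]
  · have h := mul_le_mul_of_nonneg_left (aux_log (p/q) (by positivity)) hp.le
    have : p * ((p/q-1)*(5*(p/q)+1)/(2*(p/q)*(p/q+2))) = 3*(p-q)^2/(2*p+4*q) + p - q := by
      field_simp
      ring
    linarith

theorem aux_pt (p q d M η : ℝ) (hp : 0 ≤ p) (hq : 0 < q) (hη : 0 < η) (hd : |d| ≤ M) :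
    -(d * (p - q)) ≤ (1/η) * (p * Real.log (p/q) - p + q) + η * M^2 * (2*p+4*q)/12 := by
  have h := mul_le_mul_of_nonneg_left (aux_kl p q hp hq) (one_div_pos.2 hη).le
  have hw : 0 < 2*p+4*q := by positivity
  have hd2 : d^2 ≤ M^2 := by
    rw [← sq_abs d]; exact pow_le_pow_left₀ (abs_nonneg d) hd 2
  have h2 : η * d^2 * (2*p+4*q)/12 ≤ η * M^2 * (2*p+4*q)/12 := by gcongr
  have h3 : (1/η) * (3*(p-q)^2/(2*p+4*q)) + η * d^2 * (2*p+4*q)/12 + d*(p-q)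
      = (6*(p-q) + η*d*(2*p+4*q))^2/(12*η*(2*p+4*q)) := by
    generalize 2*p+4*q = w at *
    field_simp
    ring
  have h4 : 0 ≤ (6*(p-q) + η*d*(2*p+4*q))^2/(12*η*(2*p+4*q)) := by positivity
  linarith

theorem aux_sum {A : Type*} [Fintype A] (p q d : A → ℝ) (M η : ℝ)
    (hp : p ∈ simplex A) (hq : q ∈ simplex A) (hq0 : ∀ a, 0 < q a) (hη : 0 < η)
    (hd : ∀ a, |d a| ≤ M) :
    -(∑ a, d a * (p a - q a)) ≤ (1/η) * KL q p + η * M^2/2 := by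
  have h := Finset.sum_le_sum (fun a (_ : a ∈ Finset.univ) =>
    aux_pt (p a) (q a) (d a) M η (hp.1 a) (hq0 a) hη (hd a))
  have e : ∑ a, ((1/η) * (p a * Real.log (p a/q a) - p a + q a) + η * M^2 * (2*p a+4*q a)/12)
      = (1/η) * (KL q p - ∑ a, p a + ∑ a, q a)
        + η * M^2 * (2 * ∑ a, p a + 4 * ∑ a, q a)/12 := by
    unfold KL
    rw [Finset.sum_add_distrib, ← Finset.mul_sum, ← Finset.sum_div, ← Finset.mul_sum,
      Finset.sum_add_distrib, Finset.sum_sub_distrib, Finset.sum_add_distrib,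
      ← Finset.mul_sum, ← Finset.mul_sum]
  rw [e, hp.2, hq.2, Finset.sum_neg_distrib] at h
  linarith

theorem aux_Q {S A : Type*} [Fintype S] [Fintype A]
    (P : S → A → S → ℝ) (c : S → A → ℝ) (γ : ℝ) (h : S → (A → ℝ) → ℝ)
    (π : S → A → ℝ) (V : S → ℝ) (s : S) (p : A → ℝ) (hp : p ∈ simplex A) :
    ∑ a, Qfun P c h γ π V s a * p a = ∑ a, p a * c s a + h s (π s)
      + γ * ∑ s', (∑ a, p a * P s a s') * V s' := by
  have e : ∑ s', (∑ a, p a * P s a s') * V s' = ∑ a, p a * ∑ s', P s a s' * V s' := by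
    simp_rw [Finset.sum_mul, Finset.mul_sum]
    rw [Finset.sum_comm]
    simp_rw [mul_assoc]
  have e2 : h s (π s) = ∑ a, p a * h s (π s) := by
    rw [← Finset.sum_mul, hp.2, one_mul]
  rw [e, e2, Finset.mul_sum, ← Finset.sum_add_distrib, ← Finset.sum_add_distrib]
  refine Finset.sum_congr rfl fun a _ => ?_
  unfold Qfun
  ring

/-- one-step inequality for SPMD with inexact action-value
estimates, pathwise form: with `𝒬 = Q^{π_k} + δ` and
`π_{k+1}(·|s) = argmin_{p∈Δ_A} { η_k [⟨𝒬(s,·), p⟩ + h^p(s)] + D_{π_k}^p(s) }`,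
for every `s`:
`V^{π_{k+1}}(s) - V^{π_k}(s) ≤ ⟨𝒬(s,·), π_{k+1}(·|s) - π_k(·|s)⟩
  + h^{π_{k+1}}(s) - h^{π_k}(s) + (1/η_k) D_{π_k}^{π_{k+1}}(s)
  + η_k ‖δ‖_∞² / (2(1-γ))`. -/
theorem spmd_one_step {S A : Type*} [Fintype S] [Fintype A]
    [Nonempty S] [Nonempty A]
    (P : S → A → S → ℝ) (hP0 : ∀ s a s', 0 ≤ P s a s')
    (hP1 : ∀ s a, ∑ s', P s a s' = 1)
    (c : S → A → ℝ) (γ : ℝ) (hγ0 : 0 < γ) (hγ1 : γ < 1)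
    (h : S → (A → ℝ) → ℝ) (h' : S → (A → ℝ) → A → ℝ)
    (hconv : ConvexReg h h' 0)
    (πk : S → A → ℝ) (hπk : IsPolicy πk) (hπkpos : ∀ s a, 0 < πk s a)
    (δ : S → A → ℝ) (ηk : ℝ) (hηk : 0 < ηk)
    (πk1 : S → A → ℝ)
    (Vk Vk1 : S → ℝ)
    (hVk : IsValue P c h γ πk Vk) (hVk1 : IsValue P c h γ πk1 Vk1)
    (hstep : ∀ s, IsProxStep (fun a => Qfun P c h γ πk Vk s a + δ s a) (h s)
      ηk (πk s) (πk1 s)) :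
    ∀ s, Vk1 s - Vk s ≤
      (∑ a, (Qfun P c h γ πk Vk s a + δ s a) * (πk1 s a - πk s a))
        + (h s (πk1 s) - h s (πk s))
        + (1 / ηk) * KL (πk s) (πk1 s)
        + ηk * (⨆ q : S × A, |δ q.1 q.2|) ^ 2 / (2 * (1 - γ)) := by
  intro s0
  set M : ℝ := ⨆ q : S × A, |δ q.1 q.2| with hM
  have hδ : ∀ s a, |δ s a| ≤ M := fun s a =>
    le_ciSup (f := fun q : S × A => |δ q.1 q.2|) (Set.finite_range _).bddAbove (s, a)
  set g : S → ℝ := fun s => (∑ a, (Qfun P c h γ πk Vk s a + δ s a) * (πk1 s a - πk s a))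
        + (h s (πk1 s) - h s (πk s)) + (1 / ηk) * KL (πk s) (πk1 s) with hg
  set e : ℝ := ηk * M ^ 2 / 2 with he
  have he0 : 0 ≤ e := by positivity
  have hg0 : ∀ s, g s ≤ 0 := by
    intro s
    have h1 := (hstep s).2 (πk s) (hπk s)
    have hk : KL (πk s) (πk s) = 0 := by
      unfold KL
      refine Finset.sum_eq_zero fun a _ => ?_
      rw [div_self (hπkpos s a).ne', Real.log_one, mul_zero]
    rw [hk] at h1
    have h2 : ηk * g s ≤ 0 := by
      have h3 : ηk * ((1 / ηk) * KL (πk s) (πk1 s)) = KL (πk s) (πk1 s) := by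
        field_simp
      simp only [hg, mul_add, h3, mul_sub, Finset.sum_sub_distrib] at h1 ⊢
      linarith
    by_contra hc
    push Not at hc
    linarith [mul_pos hηk hc]
  have hrec : ∀ s, Vk1 s - Vk s ≤ g s + e
      + γ * ∑ s', (∑ a, πk1 s a * P s a s') * (Vk1 s' - Vk s') := by
    intro s
    have h1 := aux_Q P c γ h πk Vk s (πk1 s) (hstep s).1
    have h2 := aux_Q P c γ h πk Vk s (πk s) (hπk s)
    have h3 := aux_sum (πk1 s) (πk s) (δ s) M ηk (hstep s).1 (hπk s) (hπkpos s) hηk (hδ s)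
    have h4 := hVk s
    have h5 := hVk1 s
    have h6 : g s = ∑ a, Qfun P c h γ πk Vk s a * πk1 s a - ∑ a, Qfun P c h γ πk Vk s a * πk s a
        + ∑ a, δ s a * (πk1 s a - πk s a) + (h s (πk1 s) - h s (πk s))
        + (1 / ηk) * KL (πk s) (πk1 s) := by
      simp only [hg, add_mul, Finset.sum_add_distrib]
      simp only [mul_sub, Finset.sum_sub_distrib]
    simp only [mul_sub, Finset.sum_sub_distrib] at h3 h6 ⊢
    linarith
  have hw0 : ∀ s s', 0 ≤ ∑ a, πk1 s a * P s a s' := fun s s' =>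
    Finset.sum_nonneg fun a _ => mul_nonneg ((hstep s).1.1 a) (hP0 s a s')
  have hw1 : ∀ s, ∑ s', ∑ a, πk1 s a * P s a s' = 1 := by
    intro s
    rw [Finset.sum_comm]
    simp_rw [← Finset.mul_sum, hP1, mul_one]
    exact (hstep s).1.2
  obtain ⟨m, hm⟩ := Finite.exists_max (fun s => Vk1 s - Vk s)
  have hav : ∀ s, ∑ s', (∑ a, πk1 s a * P s a s') * (Vk1 s' - Vk s') ≤ Vk1 m - Vk m := by
    intro s
    calc _ ≤ ∑ s', (∑ a, πk1 s a * P s a s') * (Vk1 m - Vk m) :=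
          Finset.sum_le_sum fun s' _ => mul_le_mul_of_nonneg_left (hm s') (hw0 s s')
      _ = _ := by rw [← Finset.sum_mul, hw1, one_mul]
  have h1γ : 0 < 1 - γ := by linarith
  have hWm : Vk1 m - Vk m ≤ e / (1 - γ) := by
    rw [le_div_iff₀ h1γ]
    have := mul_le_mul_of_nonneg_left (hav m) hγ0.le
    linarith [hrec m, hg0 m]
  have h7 := mul_le_mul_of_nonneg_left ((hav s0).trans hWm) hγ0.le
  have h8 : ηk * M ^ 2 / (2 * (1 - γ)) = e + γ * (e / (1 - γ)) := by
    rw [he]; field_simp; ring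
  rw [h8]
  have h9 := hrec s0
  change Vk1 s0 - Vk s0 ≤ g s0 + _
  linarith


end RL
end
end
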